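/- In the blow-up setup, there exists a constant C > 0 such that |x|^{(n−2k)/2}·|u_i(x)| ≤ C for all x ∈ B and all i. -/

import Mathlib

/-!
A radial function is determined by its profile `f r = u (r e)` along a unit vector `e`, and the
profiles `f_j` of `Δ^j u` satisfy `(r^{n-1} f_j')' = r^{n-1} f_{j+1}` (`IsRad.lap_eq`,
`RadChain.hasDerivAt_flux`); the estimate is therefore one about functions of one variable.

Energy. The equation and the bound on `‖u_i‖_{L^{2*}}` bound `∫ Δ^k u · u` uniformly in `i`
(`energy_bound`). The Dirichlet conditions make `f_j` vanish at `r = 1` when `2 j < k` and `f_j'`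
vanish there when `2 j + 1 < k` (`RadChain.bdry_iter`), so Green's identities transport half of the
Laplacians onto `u` without boundary terms (`RadChain.shift_iter`). Up to sign the energy is then
`∫ |Δ^m u|²` if `k = 2m`, and `∫ |∇ Δ^m u|²` if `k = 2m + 1`. Only the absolute value of the energy
is used, so the parity of `k` and the sign convention for `Δ` do not matter.

Decay. The `L²` bound gives `|Δ^{m-1} u| ≤ C r^{2-n/2}` (even case) or `|Δ^m u| ≤ C r^{1-n/2}` (odd
case). Integrating the flux from `0` and then `f_j'` from the boundary shows that
`|f_{j+1}| ≤ C r^{-a}` with `2 < a < n` implies `|f_j| ≤ C' r^{2-a}` (`RadChain.decay_step`). The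
hypothesis `2k < n` keeps the exponent in this range at every step, and the descent stops at
`|u| ≤ C r^{k-n/2}` (`radChain_decay`), which is the claim.
-/

open MeasureTheory Metric Filter Topology Real

noncomputable section

def lap {n : ℕ} (u : EuclideanSpace ℝ (Fin n) → ℝ) : EuclideanSpace ℝ (Fin n) → ℝ :=
  fun x => ∑ i : Fin n, iteratedFDeriv ℝ 2 u x (fun _ => EuclideanSpace.single i 1)

def iterLap {n : ℕ} (k : ℕ) (u : EuclideanSpace ℝ (Fin n) → ℝ) :
    EuclideanSpace ℝ (Fin n) → ℝ :=
  lap^[k] u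

def twoStar (n k : ℕ) : ℝ := 2 * n / ((n : ℝ) - 2 * k)

def ank (n k : ℕ) : ℝ :=
  (∏ j ∈ Finset.range (2 * k), ((n : ℝ) + 2 * ((j : ℝ) - (k : ℝ)))) ^ (-(1 : ℝ) / (k : ℝ))

def Ubub (n k : ℕ) (x : EuclideanSpace ℝ (Fin n)) : ℝ :=
  (1 / (1 + ank n k * ‖x‖ ^ 2)) ^ (((n : ℝ) - 2 * k) / 2)

def BlowUpSetup (n k : ℕ) (M : ℝ) (lam : ℕ → ℝ)
    (u : ℕ → EuclideanSpace ℝ (Fin n) → ℝ) : Prop :=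
  (∀ i, 0 < lam i) ∧ Filter.Tendsto lam Filter.atTop (nhds 0) ∧
  (∀ i, ContDiff ℝ (2 * k : ℕ) (u i)) ∧
  (∀ i, ∀ x y : EuclideanSpace ℝ (Fin n), ‖x‖ = ‖y‖ → u i x = u i y) ∧
  (∀ i, ∀ x ∈ Metric.ball (0 : EuclideanSpace ℝ (Fin n)) 1,
    iterLap k (u i) x - lam i * u i x = |u i x| ^ (twoStar n k - 2) * u i x) ∧
  (∀ i, ∀ x : EuclideanSpace ℝ (Fin n), ‖x‖ = 1 → ∀ j < k,
    iteratedFDeriv ℝ j (u i) x (fun _ => x) = 0) ∧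
  (∀ i, ∃ x ∈ Metric.closedBall (0 : EuclideanSpace ℝ (Fin n)) 1, u i x ≠ 0) ∧
  (∀ i, (∫ x in Metric.ball (0 : EuclideanSpace ℝ (Fin n)) 1, |u i x| ^ twoStar n k)
      ≤ M ^ twoStar n k)

def CLocConv {n : ℕ} (m : ℕ) (S : Set (EuclideanSpace ℝ (Fin n)))
    (f : ℕ → EuclideanSpace ℝ (Fin n) → ℝ) (g : EuclideanSpace ℝ (Fin n) → ℝ) : Prop :=
  ∀ K : Set (EuclideanSpace ℝ (Fin n)), K ⊆ S → IsCompact K → ∀ j ≤ m,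
    Filter.Tendsto
      (fun i => ⨆ x : K, ‖iteratedFDeriv ℝ j (f i) (x : EuclideanSpace ℝ (Fin n))
        - iteratedFDeriv ℝ j g (x : EuclideanSpace ℝ (Fin n))‖)
      Filter.atTop (nhds 0)

def Concentration (n k : ℕ) (u : ℕ → EuclideanSpace ℝ (Fin n) → ℝ)
    (ν : ℕ → ℝ) (ε₀ : ℝ) : Prop :=
  (∀ i, 0 < ν i) ∧ Filter.Tendsto ν Filter.atTop (nhds 0) ∧ (ε₀ = 1 ∨ ε₀ = -1) ∧
  CLocConv (2 * k) {(0 : EuclideanSpace ℝ (Fin n))}ᶜ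
    (fun i z => (ν i) ^ (((n : ℝ) - 2 * k) / 2) * u i ((ν i) • z))
    (fun z => ε₀ * Ubub n k z) ∧
  Filter.Tendsto (fun R : ℝ => Filter.limsup (fun i =>
      ⨆ x : {x : EuclideanSpace ℝ (Fin n) //
        x ∈ Metric.ball (0 : EuclideanSpace ℝ (Fin n)) 1 ∧ R * ν i ≤ ‖x‖},
        ‖(x : EuclideanSpace ℝ (Fin n))‖ ^ (((n : ℝ) - 2 * k) / 2)
          * |u i (x : EuclideanSpace ℝ (Fin n))|) Filter.atTop)
    Filter.atTop (nhds 0)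

def Tfun (n k : ℕ) (u : EuclideanSpace ℝ (Fin n) → ℝ) (x : EuclideanSpace ℝ (Fin n)) : ℝ :=
  (((n : ℝ) - 2 * k) / 2) * u x + fderiv ℝ u x x

def ndS {n : ℕ} (u : EuclideanSpace ℝ (Fin n) → ℝ) (x : EuclideanSpace ℝ (Fin n)) : ℝ :=
  fderiv ℝ u x (‖x‖⁻¹ • x)

def halfLapSq {n : ℕ} (k : ℕ) (u : EuclideanSpace ℝ (Fin n) → ℝ)
    (x : EuclideanSpace ℝ (Fin n)) : ℝ :=
  if k % 2 = 0 then (iterLap (k / 2) u x) ^ 2 else ‖gradient (iterLap (k / 2) u) x‖ ^ 2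

def Sfun (n k : ℕ) (u : EuclideanSpace ℝ (Fin n) → ℝ) (x : EuclideanSpace ℝ (Fin n)) : ℝ :=
  (∑ i ∈ Finset.range (k / 2),
    (-(ndS (iterLap (k - i - 1) u) x) * iterLap i (Tfun n k u) x
      + iterLap (k - i - 1) u x * ndS (iterLap i (Tfun n k u)) x))
  - (if k % 2 = 1 then ndS (iterLap (k / 2) u) x * iterLap (k / 2) (Tfun n k u) x else 0)

def sphVol (n : ℕ) : ℝ :=
  (μH[(n : ℝ) - 1] (Metric.sphere (0 : EuclideanSpace ℝ (Fin n)) 1)).toReal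

def Cnk (n k : ℕ) : ℝ :=
  1 / (((n : ℝ) - 2) * sphVol n *
    ∏ i ∈ Finset.Icc 1 (k - 1), (((n : ℝ) - 2 * k + 2 * ((i : ℝ) - 1)) * (2 * (k : ℝ) - 2 * (i : ℝ))))

/-! ### The Laplacian of a radial function -/

/-- The profile `r ↦ u (r e)` of a function `u` along the line spanned by `e`; for a unit vector
`e` and radial `u` it satisfies `u x = radProfile e u ‖x‖`. -/
def radProfile {n : ℕ} (e : EuclideanSpace ℝ (Fin n)) (u : EuclideanSpace ℝ (Fin n) → ℝ) (r : ℝ) :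
    ℝ :=
  u (r • e)

/-- `u` is radial: `u x` depends on `‖x‖` only. -/
def IsRad {n : ℕ} (u : EuclideanSpace ℝ (Fin n) → ℝ) : Prop := ∀ x y, ‖x‖ = ‖y‖ → u x = u y

lemma IsRad.eq_radProfile {n : ℕ} {e : EuclideanSpace ℝ (Fin n)} (he : ‖e‖ = 1)
    {u : EuclideanSpace ℝ (Fin n) → ℝ} (hu : IsRad u) (x : EuclideanSpace ℝ (Fin n)) :
    u x = radProfile e u ‖x‖ :=
  hu _ _ (by simp [norm_smul, he])

lemma contDiff_radProfile {n : ℕ} (e : EuclideanSpace ℝ (Fin n))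
    {u : EuclideanSpace ℝ (Fin n) → ℝ} {N : ℕ} (hu : ContDiff ℝ N u) :
    ContDiff ℝ N (radProfile e u) := by
  unfold radProfile
  exact hu.comp (contDiff_id.smul contDiff_const)

lemma hasDerivAt_norm_line {n : ℕ} (x v : EuclideanSpace ℝ (Fin n)) (hx : x ≠ 0) :
    HasDerivAt (fun t : ℝ => ‖x + t • v‖) (inner ℝ x v / ‖x‖) 0 := by
  have h1 : HasDerivAt (fun t : ℝ => x + t • v) v 0 := by
    simpa using ((hasDerivAt_id (0:ℝ)).smul_const v).const_add x
  have h2 := h1.norm_sq.sqrt (by simpa using hx)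
  have h3 : (fun t : ℝ => √(‖x + t • v‖ ^ 2)) = fun t : ℝ => ‖x + t • v‖ := by
    ext t; exact Real.sqrt_sq (norm_nonneg _)
  rw [h3] at h2
  refine h2.congr_deriv ?_
  simp only [zero_smul, add_zero, Real.sqrt_sq (norm_nonneg _)]
  have := norm_ne_zero_iff.2 hx
  field_simp

/-- First derivatives of a radial function in terms of its profile. -/
lemma IsRad.fderiv_apply {n : ℕ} {e : EuclideanSpace ℝ (Fin n)} (he : ‖e‖ = 1)
    {u : EuclideanSpace ℝ (Fin n) → ℝ} (hu : IsRad u) (hc : ContDiff ℝ 2 u)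
    (x v : EuclideanSpace ℝ (Fin n)) (hx : x ≠ 0) :
    fderiv ℝ u x v = deriv (radProfile e u) ‖x‖ * (inner ℝ x v / ‖x‖) := by
  have hd : Differentiable ℝ u := hc.differentiable (by norm_num)
  have hp : ContDiff ℝ 2 (radProfile e u) := contDiff_radProfile (N := 2) e hc
  have hpd : Differentiable ℝ (radProfile e u) := hp.differentiable (by norm_num)
  have h1 : HasDerivAt (fun t : ℝ => x + t • v) v 0 := by
    simpa using ((hasDerivAt_id (0:ℝ)).smul_const v).const_add x
  have h2 : HasDerivAt (fun t : ℝ => u (x + t • v)) (fderiv ℝ u x v) 0 := by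
    have h := (hd (x + (0:ℝ) • v)).hasFDerivAt.comp_hasDerivAt (0:ℝ) h1
    simpa [Function.comp_def] using h
  have h3 : HasDerivAt (fun t : ℝ => u (x + t • v))
      (deriv (radProfile e u) ‖x‖ * (inner ℝ x v / ‖x‖)) 0 := by
    have hq : HasDerivAt (radProfile e u) (deriv (radProfile e u) ‖x‖) (‖x + (0:ℝ) • v‖) := by
      simpa using (hpd ‖x‖).hasDerivAt
    have h := hq.comp (0:ℝ) (hasDerivAt_norm_line x v hx)
    refine h.congr_of_eventuallyEq (Eventually.of_forall fun t => ?_)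
    exact hu.eq_radProfile he _
  exact h2.unique h3

/-- The Laplacian of a radial function in polar coordinates. -/
lemma IsRad.lap_eq {n : ℕ} {e : EuclideanSpace ℝ (Fin n)} (he : ‖e‖ = 1)
    {u : EuclideanSpace ℝ (Fin n) → ℝ} (hu : IsRad u) (hc : ContDiff ℝ 2 u)
    (x : EuclideanSpace ℝ (Fin n)) (hx : x ≠ 0) :
    lap u x = deriv (deriv (radProfile e u)) ‖x‖
      + ((n : ℝ) - 1) / ‖x‖ * deriv (radProfile e u) ‖x‖ := by
  have hp : ContDiff ℝ 2 (radProfile e u) := contDiff_radProfile (N := 2) e hc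
  have hp1 : ContDiff ℝ 1 (deriv (radProfile e u)) := by
    have : ContDiff ℝ (1 + 1) (radProfile e u) := by simpa [one_add_one_eq_two] using hp
    exact (contDiff_succ_iff_deriv.1 this).2.2
  have hpd : Differentiable ℝ (deriv (radProfile e u)) := hp1.differentiable (by norm_num)
  have hc1 : Differentiable ℝ (fderiv ℝ u) :=
    (hc.fderiv_right (m := 1) (by norm_num)).differentiable (by norm_num)
  have hnx : ‖x‖ ≠ 0 := norm_ne_zero_iff.2 hx
  have key : ∀ i : Fin n, iteratedFDeriv ℝ 2 u x (fun _ => EuclideanSpace.single i 1)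
      = (deriv (deriv (radProfile e u)) ‖x‖ / ‖x‖ ^ 2 - deriv (radProfile e u) ‖x‖ / ‖x‖ ^ 3)
          * (x i) ^ 2 + deriv (radProfile e u) ‖x‖ / ‖x‖ := by
    intro i
    rw [iteratedFDeriv_two_apply]
    set v : EuclideanSpace ℝ (Fin n) := EuclideanSpace.single i 1 with hv
    have hxv : ∀ y : EuclideanSpace ℝ (Fin n), inner ℝ y v = y i := by
      intro y; simp [hv, EuclideanSpace.inner_single_right]
    have hvi : v i = 1 := by simp [hv]
    have h1 : HasDerivAt (fun t : ℝ => x + t • v) v 0 := by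
      simpa using ((hasDerivAt_id (0:ℝ)).smul_const v).const_add x
    have h2 : HasDerivAt (fun t : ℝ => fderiv ℝ u (x + t • v) v) (fderiv ℝ (fderiv ℝ u) x v v) 0 := by
      have h := (hc1 (x + (0:ℝ) • v)).hasFDerivAt.comp_hasDerivAt (0:ℝ) h1
      have h' := h.clm_apply (hasDerivAt_const (0:ℝ) v)
      simpa using h'
    have hn := hasDerivAt_norm_line x v hx
    rw [hxv] at hn
    have hcoord : HasDerivAt (fun t : ℝ => (x + t • v) i) 1 0 := by
      simpa [hvi] using (hasDerivAt_id (0:ℝ)).const_add (x i)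
    have hq : HasDerivAt (deriv (radProfile e u)) (deriv (deriv (radProfile e u)) ‖x‖)
        (‖x + (0:ℝ) • v‖) := by
      simpa using (hpd ‖x‖).hasDerivAt
    have h3 := (hq.comp (0:ℝ) hn).mul (hcoord.div hn (by simpa using hnx))
    have hev : ∀ᶠ t in 𝓝 (0:ℝ), x + t • v ≠ 0 := by
      have : ContinuousAt (fun t : ℝ => x + t • v) 0 := h1.continuousAt
      exact this.eventually_ne (by simpa using hx)
    have h4 := h3.congr_of_eventuallyEq (f₁ := fun t : ℝ => fderiv ℝ u (x + t • v) v) (by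
      filter_upwards [hev] with t ht
      rw [hu.fderiv_apply he hc _ v ht, hxv]
      rfl)
    rw [h2.unique h4]
    simp only [Function.comp, zero_smul, add_zero, Pi.div_apply]
    field_simp
    ring
  unfold lap
  rw [Finset.sum_congr rfl (fun i _ => key i), Finset.sum_add_distrib, ← Finset.mul_sum,
    ← EuclideanSpace.real_norm_sq_eq]
  simp only [Finset.sum_const, Finset.card_univ, Fintype.card_fin, nsmul_eq_mul]
  field_simp
  ring

lemma IsRad.lap {n : ℕ} {e : EuclideanSpace ℝ (Fin n)} (he : ‖e‖ = 1)
    {u : EuclideanSpace ℝ (Fin n) → ℝ} (hu : IsRad u) (hc : ContDiff ℝ 2 u) : IsRad (lap u) := by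
  intro x y hxy
  by_cases hx : x = 0
  · have hy : y = 0 := by rw [← norm_eq_zero, ← hxy, hx, norm_zero]
    rw [hx, hy]
  · have hy : y ≠ 0 := by rw [← norm_ne_zero_iff, ← hxy]; exact norm_ne_zero_iff.2 hx
    rw [hu.lap_eq he hc x hx, hu.lap_eq he hc y hy, hxy]

lemma contDiff_lap {n N : ℕ} {u : EuclideanSpace ℝ (Fin n) → ℝ} (hu : ContDiff ℝ (N + 2 : ℕ) u) :
    ContDiff ℝ N (lap u) := by
  unfold lap
  refine ContDiff.sum fun i _ => ?_
  have h := hu.iteratedFDeriv_right (m := (N : WithTop ℕ∞)) (i := 2) (by norm_cast)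
  exact (ContinuousMultilinearMap.apply ℝ (fun _ : Fin 2 => EuclideanSpace ℝ (Fin n)) ℝ
    (fun _ => EuclideanSpace.single i 1)).contDiff.comp h

/-- Iterated Laplacians of a radial `C^{2k}` function are radial and lose two derivatives at each
step. -/
lemma iterLap_reg {n k : ℕ} {e : EuclideanSpace ℝ (Fin n)} (he : ‖e‖ = 1)
    {u : EuclideanSpace ℝ (Fin n) → ℝ} (hu : IsRad u) (hc : ContDiff ℝ (2 * k : ℕ) u) (j : ℕ)
    (hj : j ≤ k) : IsRad (iterLap j u) ∧ ContDiff ℝ (2 * (k - j) : ℕ) (iterLap j u) := by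
  induction j with
  | zero => exact ⟨hu, by simpa [iterLap] using hc⟩
  | succ j ih =>
    obtain ⟨h1, h2⟩ := ih (by omega)
    have hs : iterLap (j + 1) u = _root_.lap (iterLap j u) := Function.iterate_succ_apply' _ _ _
    rw [hs]
    refine ⟨h1.lap he (h2.of_le (by norm_cast; omega)), contDiff_lap ?_⟩
    convert h2 using 2
    omega

/-! ### Decay estimates in one variable -/

/-- Comparison of increments: if `|D'| ≤ G'` on `(a, b)` then `|D b - D a| ≤ G b - G a`. -/
lemma abs_sub_le_of_deriv_le {a b : ℝ} (hab : a ≤ b) {D G D' G' : ℝ → ℝ}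
    (hD : ContinuousOn D (Set.Icc a b)) (hG : ContinuousOn G (Set.Icc a b))
    (hD' : ∀ s ∈ Set.Ioo a b, HasDerivAt D (D' s) s)
    (hG' : ∀ s ∈ Set.Ioo a b, HasDerivAt G (G' s) s)
    (h : ∀ s ∈ Set.Ioo a b, |D' s| ≤ G' s) : |D b - D a| ≤ G b - G a := by
  have key : ∀ c : ℝ, |c| ≤ 1 → c * (D b - D a) ≤ G b - G a := by
    intro c hc
    have hm : MonotoneOn (fun s => G s - c * D s) (Set.Icc a b) := by
      have hder : ∀ s ∈ Set.Ioo a b, HasDerivAt (fun s => G s - c * D s) (G' s - c * D' s) s :=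
        fun s hs => (hG' s hs).sub ((hD' s hs).const_mul c)
      refine monotoneOn_of_deriv_nonneg (convex_Icc a b)
        (hG.sub (continuousOn_const.mul hD)) ?_ ?_
      · rw [interior_Icc]
        exact fun s hs => (hder s hs).differentiableAt.differentiableWithinAt
      · rw [interior_Icc]
        intro s hs
        rw [(hder s hs).deriv, sub_nonneg]
        calc c * D' s ≤ |c * D' s| := le_abs_self _
          _ = |c| * |D' s| := abs_mul _ _
          _ ≤ 1 * |D' s| := by gcongr
          _ ≤ G' s := by rw [one_mul]; exact h s hs
    have := hm (Set.left_mem_Icc.2 hab) (Set.right_mem_Icc.2 hab) hab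
    simp only at this
    linarith
  rw [abs_le]
  constructor
  · have := key (-1) (by simp)
    linarith
  · have := key 1 (by simp)
    linarith

/-- Decay of the flux `D = r^{n-1} f'` from a pointwise bound `|Δf| ≤ K r^{-a}`, `a < n`. -/
lemma flux_bound {n : ℕ} (hn : 1 ≤ n) {K a : ℝ} (ha : a < n) {D w : ℝ → ℝ}
    (hD : Continuous D) (hD0 : D 0 = 0)
    (hD' : ∀ s, 0 < s → HasDerivAt D (s ^ (n - 1) * w s) s)
    (hw : ∀ s ∈ Set.Ioo (0:ℝ) 1, |w s| ≤ K * s ^ (-a)) {r : ℝ} (hr : r ∈ Set.Ioo (0:ℝ) 1) :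
    |D r| ≤ K / (n - a) * r ^ ((n:ℝ) - a) := by
  have hna : 0 < (n:ℝ) - a := sub_pos.2 ha
  have h := abs_sub_le_of_deriv_le (a := 0) (b := r) hr.1.le
    (D := D) (G := fun s => K / (n - a) * s ^ ((n:ℝ) - a)) (D' := fun s => s ^ (n - 1) * w s)
    (G' := fun s => K / (n - a) * (((n:ℝ) - a) * s ^ ((n:ℝ) - a - 1))) hD.continuousOn
    (continuousOn_const.mul (Real.continuous_rpow_const hna.le).continuousOn)
    (fun s hs => hD' s hs.1)
    (fun s hs => (Real.hasDerivAt_rpow_const (Or.inl hs.1.ne')).const_mul _)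
    (fun s hs => by
      rw [abs_mul, abs_of_nonneg (pow_nonneg hs.1.le _)]
      have h1 : s ^ ((n:ℝ) - a - 1) = s ^ (n - 1) * s ^ (-a) := by
        rw [← Real.rpow_natCast s (n - 1), ← Real.rpow_add hs.1]
        congr 1
        push_cast [Nat.cast_sub hn]
        ring
      have h2 := hw s ⟨hs.1, hs.2.trans hr.2⟩
      calc s ^ (n - 1) * |w s| ≤ s ^ (n - 1) * (K * s ^ (-a)) :=
            mul_le_mul_of_nonneg_left h2 (pow_nonneg hs.1.le _)
        _ = _ := by rw [h1]; field_simp)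
  simpa [hD0, Real.zero_rpow hna.ne'] using h

/-- Integration of `|f'| ≤ K r^{1-a}`, `a > 2`, from the boundary where `f` vanishes. -/
lemma decay_of_deriv {K a : ℝ} (hK : 0 ≤ K) (ha : 2 < a) {f f' : ℝ → ℝ}
    (hf : ∀ s, HasDerivAt f (f' s) s) (hf1 : f 1 = 0)
    (hb : ∀ s ∈ Set.Ioo (0:ℝ) 1, |f' s| ≤ K * s ^ (1 - a)) {r : ℝ} (hr : r ∈ Set.Ioo (0:ℝ) 1) :
    |f r| ≤ K / (a - 2) * r ^ (2 - a) := by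
  have ha2 : 0 < a - 2 := sub_pos.2 ha
  have h := abs_sub_le_of_deriv_le (a := r) (b := 1) hr.2.le
    (D := f) (G := fun s => K / (a - 2) * (-s ^ (2 - a))) (D' := f')
    (G' := fun s => K / (a - 2) * (-((2 - a) * s ^ (2 - a - 1))))
    (fun s _ => (hf s).continuousAt.continuousWithinAt)
    (fun s hs => ((Real.hasDerivAt_rpow_const (p := 2 - a)
      (Or.inl (hr.1.trans_le hs.1).ne')).neg.const_mul _).continuousAt.continuousWithinAt)
    (fun s _ => hf s)
    (fun s hs => (Real.hasDerivAt_rpow_const (Or.inl (hr.1.trans hs.1).ne')).neg.const_mul _)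
    (fun s hs => by
      refine (hb s ⟨hr.1.trans hs.1, hs.2⟩).trans (le_of_eq ?_)
      have : 2 - a - 1 = 1 - a := by ring
      rw [this]
      field_simp
      ring)
  rw [hf1, zero_sub, abs_neg, Real.one_rpow] at h
  refine h.trans ?_
  have : 0 ≤ K / (a - 2) := div_nonneg hK ha2.le
  nlinarith

/-- Decay of the flux `D = r^{n-1} f'` from a weighted `L²` bound on `Δf`; the mixed term is
absorbed by the arithmetic-geometric inequality with weight `r^{n/2}`. -/
lemma flux_bound_of_L2 {n : ℕ} (hn : 1 ≤ n) {E : ℝ} {D w : ℝ → ℝ}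
    (hD : Continuous D) (hD0 : D 0 = 0) (hw : Continuous w)
    (hD' : ∀ s, 0 < s → HasDerivAt D (s ^ (n - 1) * w s) s)
    (hE : ∫ s in (0:ℝ)..1, s ^ (n - 1) * w s ^ 2 ≤ E) {r : ℝ} (hr : r ∈ Set.Ioo (0:ℝ) 1) :
    |D r| ≤ (E + 1) * r ^ ((n:ℝ) / 2) := by
  have hn' : (1:ℝ) ≤ n := by exact_mod_cast hn
  have hr0 := hr.1
  set ε : ℝ := r ^ ((n:ℝ) / 2) with hε
  have hε0 : 0 < ε := Real.rpow_pos_of_pos hr0 _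
  have hεε : r ^ n = ε * ε := by
    rw [hε, ← Real.rpow_add hr0, add_halves, Real.rpow_natCast]
  set q : ℝ → ℝ := fun s => s ^ (n - 1) * w s ^ 2 with hq
  have hqc : Continuous q := by fun_prop
  have hQ : ∀ s, HasDerivAt (fun x => ∫ t in (0:ℝ)..x, q t) (q s) s := fun s =>
    intervalIntegral.integral_hasDerivAt_right (hqc.intervalIntegrable _ _)
      (hqc.stronglyMeasurableAtFilter _ _) hqc.continuousAt
  have hG : ∀ s, HasDerivAt (fun x => (ε * (∫ t in (0:ℝ)..x, q t) + ε⁻¹ * (x ^ n / n)) / 2)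
      ((ε * q s + ε⁻¹ * (n * s ^ (n - 1) / n)) / 2) s := fun s =>
    (((hQ s).const_mul _).add (((hasDerivAt_pow n s).div_const _).const_mul _)).div_const _
  have h := abs_sub_le_of_deriv_le hr0.le hD.continuousOn
    (fun s _ => (hG s).continuousAt.continuousWithinAt) (fun s hs => hD' s hs.1)
    (fun s _ => hG s)
    (fun s hs => by
      have hs0 : 0 ≤ s ^ (n - 1) := pow_nonneg hs.1.le _
      rw [abs_mul, abs_of_nonneg hs0]
      have hi : ε * ε⁻¹ = 1 := mul_inv_cancel₀ hε0.ne'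
      have hi0 : 0 < ε⁻¹ := inv_pos.2 hε0
      have h1 : 0 ≤ ε⁻¹ * (ε * |w s| - 1) ^ 2 := by positivity
      have h2 : ε⁻¹ * (ε * |w s| - 1) ^ 2 = ε * w s ^ 2 - 2 * |w s| + ε⁻¹ := by
        rw [← sq_abs (w s)]
        field_simp
        ring
      have h3 : |w s| ≤ (ε * w s ^ 2 + ε⁻¹) / 2 := by linarith
      calc s ^ (n - 1) * |w s| ≤ s ^ (n - 1) * ((ε * w s ^ 2 + ε⁻¹) / 2) := by gcongr
        _ = _ := by simp only [hq]; field_simp)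
  rw [hD0, sub_zero] at h
  refine h.trans ?_
  have hQr : ∫ t in (0:ℝ)..r, q t ≤ E := by
    refine le_trans ?_ hE
    refine intervalIntegral.integral_mono_interval le_rfl hr0.le hr.2.le ?_
      (hqc.intervalIntegrable _ _)
    refine (ae_restrict_iff' measurableSet_Ioc).2 (Eventually.of_forall fun s hs => ?_)
    exact mul_nonneg (pow_nonneg hs.1.le _) (sq_nonneg _)
  have hE0 : 0 ≤ ∫ t in (0:ℝ)..r, q t :=
    intervalIntegral.integral_nonneg hr0.le fun s hs =>
      mul_nonneg (pow_nonneg hs.1 _) (sq_nonneg _)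
  have h0n : n ≠ 0 := by omega
  simp only [intervalIntegral.integral_same, mul_zero, zero_pow h0n, zero_div, add_zero, sub_zero]
  have h5 : ε⁻¹ * (r ^ n / n) ≤ ε := by
    rw [hεε]
    have : ε⁻¹ * (ε * ε / n) = ε / n := by field_simp
    rw [this]
    exact div_le_self hε0.le hn'
  nlinarith

/-- Pointwise decay from a weighted `L²` bound on `f'` and `f 1 = 0`, by the
arithmetic-geometric inequality with weight `r^{1-n/2} s^{n-1}`. -/
lemma decay_of_deriv_L2 {n : ℕ} (hn : 3 ≤ n) {E : ℝ} {f f' : ℝ → ℝ}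
    (hf : ∀ s, HasDerivAt f (f' s) s) (hf' : Continuous f') (hf1 : f 1 = 0)
    (hE : ∫ s in (0:ℝ)..1, s ^ (n - 1) * f' s ^ 2 ≤ E) {r : ℝ} (hr : r ∈ Set.Ioo (0:ℝ) 1) :
    |f r| ≤ (E + 1) * r ^ (1 - (n:ℝ) / 2) := by
  have hn' : (3:ℝ) ≤ n := by exact_mod_cast hn
  have hr0 := hr.1
  set ε : ℝ := r ^ (1 - (n:ℝ) / 2) with hε
  have hε0 : 0 < ε := Real.rpow_pos_of_pos hr0 _
  have hεε : r ^ (2 - (n:ℝ)) = ε * ε := by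
    rw [hε, ← Real.rpow_add hr0]; congr 1; ring
  set q : ℝ → ℝ := fun s => s ^ (n - 1) * f' s ^ 2 with hq
  have hqc : Continuous q := by fun_prop
  have hq0 : ∀ s, 0 ≤ s → 0 ≤ q s := fun s hs => mul_nonneg (pow_nonneg hs _) (sq_nonneg _)
  have hQ : ∀ s, HasDerivAt (fun x => ∫ t in (0:ℝ)..x, q t) (q s) s := fun s =>
    intervalIntegral.integral_hasDerivAt_right (hqc.intervalIntegrable _ _)
      (hqc.stronglyMeasurableAtFilter _ _) hqc.continuousAt
  have hG : ∀ s, 0 < s → HasDerivAt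
      (fun x => (ε * (∫ t in (0:ℝ)..x, q t) + ε⁻¹ * (x ^ (2 - (n:ℝ)) / (2 - n))) / 2)
      ((ε * q s + ε⁻¹ * ((2 - (n:ℝ)) * s ^ (2 - (n:ℝ) - 1) / (2 - n))) / 2) s := fun s hs =>
    (((hQ s).const_mul _).add
      (((Real.hasDerivAt_rpow_const (Or.inl hs.ne')).div_const _).const_mul _)).div_const _
  have h := abs_sub_le_of_deriv_le hr.2.le
    (fun s _ => (hf s).continuousAt.continuousWithinAt)
    (fun s hs => (hG s (hr0.trans_le hs.1)).continuousAt.continuousWithinAt)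
    (fun s _ => hf s) (fun s hs => hG s (hr0.trans hs.1))
    (fun s hs => by
      have hs0 : 0 < s := hr0.trans hs.1
      set p : ℝ := s ^ (n - 1) with hp
      have hp0 : 0 < p := pow_pos hs0 _
      have h1 : s ^ (2 - (n:ℝ) - 1) = p⁻¹ := by
        rw [hp, ← Real.rpow_natCast, ← Real.rpow_neg hs0.le]
        congr 1
        push_cast [Nat.cast_sub (by omega : 1 ≤ n)]
        ring
      have h2 : (2 - (n:ℝ)) * s ^ (2 - (n:ℝ) - 1) / (2 - n) = p⁻¹ := by
        rw [h1]
        have : (2 - (n:ℝ)) ≠ 0 := by linarith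
        field_simp
      rw [h2]
      have h3 : 0 ≤ (ε * p)⁻¹ * (ε * p * |f' s| - 1) ^ 2 := by positivity
      have h4 : (ε * p)⁻¹ * (ε * p * |f' s| - 1) ^ 2
          = ε * (p * f' s ^ 2) - 2 * |f' s| + ε⁻¹ * p⁻¹ := by
        rw [← sq_abs (f' s)]
        field_simp
        ring
      simp only [hq]
      linarith)
  rw [hf1, zero_sub, abs_neg] at h
  refine h.trans ?_
  have hQr : (∫ t in (0:ℝ)..1, q t) - ∫ t in (0:ℝ)..r, q t ≤ E := by
    have : 0 ≤ ∫ t in (0:ℝ)..r, q t :=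
      intervalIntegral.integral_nonneg hr0.le fun s hs => hq0 s hs.1
    linarith
  have hE0 : 0 ≤ E := (intervalIntegral.integral_nonneg zero_le_one fun s hs => hq0 s hs.1).trans hE
  have h5 : ε⁻¹ * (r ^ (2 - (n:ℝ)) / (n - 2)) ≤ ε := by
    rw [hεε]
    have : ε⁻¹ * (ε * ε / (n - 2)) = ε / (n - 2) := by field_simp
    rw [this]
    exact div_le_self hε0.le (by linarith)
  have h6 : ε⁻¹ * ((1:ℝ) ^ (2 - (n:ℝ)) / (2 - n)) ≤ 0 := by
    rw [Real.one_rpow]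
    exact mul_nonpos_of_nonneg_of_nonpos (inv_pos.2 hε0).le
      (div_nonpos_of_nonneg_of_nonpos zero_le_one (by linarith))
  have h7 : ε⁻¹ * (r ^ (2 - (n:ℝ)) / (2 - n)) = - (ε⁻¹ * (r ^ (2 - (n:ℝ)) / (n - 2))) := by
    rw [← mul_neg, ← div_neg, neg_sub]
  have h8 := mul_le_mul_of_nonneg_left hQr hε0.le
  rw [h7]
  nlinarith [mul_nonneg hE0 hε0.le]

/-! ### Chains of profiles -/

/-- A finite sequence `F 0, …, F k` of profiles in which `F (j + 1)` is the polar form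
`f'' + (n - 1) / r * f'` of the Laplacian of `F j`, with `F 0` satisfying the Dirichlet conditions of
order `k` at `r = 1`. -/
structure RadChain (n k : ℕ) (F : ℕ → ℝ → ℝ) : Prop where
  smooth : ∀ j ≤ k, ContDiff ℝ (2 * (k - j) : ℕ) (F j)
  step : ∀ j < k, ∀ r, 0 < r →
    F (j + 1) r = deriv (deriv (F j)) r + ((n : ℝ) - 1) / r * deriv (F j) r
  bdry : ∀ j < k, iteratedDeriv j (F 0) 1 = 0

lemma radChain_of_radial {n k : ℕ} {e : EuclideanSpace ℝ (Fin n)} (he : ‖e‖ = 1)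
    {u : EuclideanSpace ℝ (Fin n) → ℝ} (hu : IsRad u) (hc : ContDiff ℝ (2 * k : ℕ) u)
    (hb : ∀ j < k, iteratedFDeriv ℝ j u e (fun _ => e) = 0) :
    RadChain n k (fun j => radProfile e (iterLap j u)) where
  smooth j hj := contDiff_radProfile e (iterLap_reg he hu hc j hj).2
  step j hj r hr := by
    obtain ⟨h1, h2⟩ := iterLap_reg he hu hc j hj.le
    have hs : iterLap (j + 1) u = lap (iterLap j u) := Function.iterate_succ_apply' _ _ _
    have he0 : e ≠ 0 := by rw [← norm_ne_zero_iff, he]; exact one_ne_zero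
    have h3 := h1.lap_eq he (h2.of_le (by norm_cast; omega)) (r • e)
      (smul_ne_zero hr.ne' he0)
    have h4 : ‖r • e‖ = r := by rw [norm_smul, he, mul_one, Real.norm_of_nonneg hr.le]
    rw [h4] at h3
    simp only [radProfile, hs] at h3 ⊢
    exact h3
  bdry j hj := by
    have h := (ContinuousLinearMap.toSpanSingleton ℝ e).iteratedFDeriv_comp_right hc (1:ℝ) (i := j)
      (by norm_cast; omega)
    have h' : radProfile e (iterLap 0 u) = u ∘ (ContinuousLinearMap.toSpanSingleton ℝ e) := by
      ext r; simp [radProfile, iterLap]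
    rw [h', iteratedDeriv_eq_iteratedFDeriv, h]
    simpa using hb j hj

namespace RadChain

variable {n k : ℕ} {F : ℕ → ℝ → ℝ}

lemma differentiable (h : RadChain n k F) {j : ℕ} (hj : j < k) : Differentiable ℝ (F j) :=
  (h.smooth j hj.le).differentiable (by norm_cast; omega)

lemma continuous (h : RadChain n k F) {j : ℕ} (hj : j ≤ k) : Continuous (F j) :=
  (h.smooth j hj).continuous

lemma contDiff_deriv (h : RadChain n k F) {j : ℕ} (hj : j < k) : ContDiff ℝ 1 (deriv (F j)) := by
  have h2 : ContDiff ℝ (1 + 1) (F j) := (h.smooth j hj.le).of_le (by norm_cast; omega)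
  exact (contDiff_succ_iff_deriv.1 h2).2.2

lemma continuous_deriv (h : RadChain n k F) {j : ℕ} (hj : j < k) : Continuous (deriv (F j)) :=
  (h.contDiff_deriv hj).continuous

/-- Divergence form of the recursion: `(r^{n-1} f')' = r^{n-1} Δf`. -/
lemma hasDerivAt_flux (h : RadChain n k F) (hn : 3 ≤ n) {j : ℕ} (hj : j < k) {r : ℝ} (hr : 0 < r) :
    HasDerivAt (fun s => s ^ (n - 1) * deriv (F j) s) (r ^ (n - 1) * F (j + 1) r) r := by
  have h1 := ((h.contDiff_deriv hj).differentiable (by norm_num) r).hasDerivAt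
  refine ((hasDerivAt_pow (n - 1) r).mul h1).congr_deriv ?_
  rw [h.step j hj r hr]
  obtain ⟨m, rfl⟩ : ∃ m, n = m + 2 := ⟨n - 2, by omega⟩
  have e1 : m + 2 - 1 = m + 1 := by omega
  simp only [e1, Nat.add_sub_cancel]
  push_cast
  field_simp
  ring

/-- Each Laplacian costs at most two orders of vanishing at the boundary. -/
lemma bdry_iter (h : RadChain n k F) (j : ℕ) : ∀ i, i + 2 * j < k → iteratedDeriv i (F j) 1 = 0 := by
  induction j with
  | zero => exact fun i hi => h.bdry i (by omega)
  | succ j ih =>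
    intro i hi
    have hjk : j < k := by omega
    have hsm : ContDiff ℝ ((i + 1 + 1 : ℕ)) (F j) :=
      (h.smooth j hjk.le).of_le (by norm_cast; omega)
    have h1 : ContDiff ℝ ((i + 1 : ℕ)) (deriv (F j)) := by
      have : ContDiff ℝ (((i + 1 : ℕ) : WithTop ℕ∞) + 1) (F j) := by exact_mod_cast hsm
      exact (contDiff_succ_iff_deriv.1 this).2.2
    have h2 : ContDiff ℝ (i : ℕ) (deriv (deriv (F j))) := by
      have : ContDiff ℝ ((i : WithTop ℕ∞) + 1) (deriv (F j)) := by exact_mod_cast h1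
      exact (contDiff_succ_iff_deriv.1 this).2.2
    have h1' : ContDiffAt ℝ (i : ℕ) (deriv (F j)) 1 :=
      (h1.of_le (by norm_cast; omega)).contDiffAt
    have hφ : ContDiffAt ℝ (i : ℕ) (fun r : ℝ => ((n : ℝ) - 1) / r) 1 :=
      contDiffAt_const.div contDiffAt_id one_ne_zero
    -- The polar form only holds for `r > 0`, hence near `1`.
    have hev : F (j + 1) =ᶠ[𝓝 1]
        fun r => deriv (deriv (F j)) r + ((n : ℝ) - 1) / r * deriv (F j) r := by
      filter_upwards [eventually_gt_nhds (zero_lt_one' ℝ)] with r hr using h.step j hjk r hr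
    rw [hev.iteratedDeriv_eq, iteratedDeriv_fun_add h2.contDiffAt (hφ.mul h1'),
      iteratedDeriv_fun_mul hφ h1', ← iteratedDeriv_succ', ← iteratedDeriv_succ',
      ih (i + 1 + 1) (by omega), zero_add]
    -- By the Leibniz rule, each remaining term contains a derivative of `F j` of order at most `i + 1`.
    refine Finset.sum_eq_zero fun l hl => ?_
    rw [← iteratedDeriv_succ', ih (i - l + 1) (by omega), mul_zero]

lemma bdry_zero (h : RadChain n k F) {j : ℕ} (hj : 2 * j < k) : F j 1 = 0 := by
  simpa using h.bdry_iter j 0 (by omega)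

lemma bdry_deriv (h : RadChain n k F) {j : ℕ} (hj : 1 + 2 * j < k) : deriv (F j) 1 = 0 := by
  simpa using h.bdry_iter j 1 (by omega)

/-- Green's first identity: the boundary term vanishes at `0` because of the weight `r^{n-1}`. -/
lemma green (h : RadChain n k F) (hn : 3 ≤ n) {a b : ℕ} (ha : a < k) (hb : b < k) :
    ∫ r in (0:ℝ)..1, r ^ (n - 1) * (F (a + 1) r * F b r + deriv (F a) r * deriv (F b) r)
      = deriv (F a) 1 * F b 1 := by
  have c1 := h.continuous_deriv ha
  have c2 := h.continuous_deriv hb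
  have c3 := h.continuous (show a + 1 ≤ k from ha)
  have c4 := h.continuous hb.le
  have key := intervalIntegral.integral_eq_sub_of_hasDerivAt_of_le (zero_le_one' ℝ)
    (f := fun r => r ^ (n - 1) * deriv (F a) r * F b r)
    (f' := fun r => r ^ (n - 1) * (F (a + 1) r * F b r + deriv (F a) r * deriv (F b) r))
    (by fun_prop)
    (fun r hr => by
      refine ((h.hasDerivAt_flux hn ha hr.1).mul (h.differentiable hb r).hasDerivAt).congr_deriv ?_
      ring)
    (Continuous.intervalIntegrable (by fun_prop) _ _)
  rw [key]
  have : n - 1 ≠ 0 := by omega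
  simp [this]

/-- Moving one Laplacian across the weighted `L²` pairing. -/
lemma shift (h : RadChain n k F) (hn : 3 ≤ n) {a b : ℕ} (ha : a < k) (hb : 2 * b + 2 ≤ k) :
    ∫ r in (0:ℝ)..1, r ^ (n - 1) * (F (a + 1) r * F b r)
      = ∫ r in (0:ℝ)..1, r ^ (n - 1) * (F a r * F (b + 1) r) := by
  have hbk : b < k := by omega
  have g1 := h.green hn ha hbk
  have g2 := h.green hn hbk ha
  have c1 := h.continuous_deriv ha
  have c2 := h.continuous_deriv hbk
  have c3 := h.continuous (show a + 1 ≤ k from ha)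
  have c4 := h.continuous hbk.le
  have c5 := h.continuous (show b + 1 ≤ k from hbk)
  have c6 := h.continuous ha.le
  rw [h.bdry_zero (j := b) (by omega), mul_zero] at g1
  rw [h.bdry_deriv (j := b) (by omega), zero_mul] at g2
  rw [← sub_eq_zero, ← intervalIntegral.integral_sub
    (Continuous.intervalIntegrable (by fun_prop) _ _)
    (Continuous.intervalIntegrable (by fun_prop) _ _)]
  have g3 := congrArg₂ (· - ·) g1 g2
  simp only [sub_zero] at g3
  rw [← intervalIntegral.integral_sub (Continuous.intervalIntegrable (by fun_prop) _ _)
    (Continuous.intervalIntegrable (by fun_prop) _ _)] at g3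
  rw [← g3]
  congr 1
  ext r
  ring

lemma shift_iter (h : RadChain n k F) (hn : 3 ≤ n) (b : ℕ) (hb : 2 * b ≤ k) :
    ∫ r in (0:ℝ)..1, r ^ (n - 1) * (F k r * F 0 r)
      = ∫ r in (0:ℝ)..1, r ^ (n - 1) * (F (k - b) r * F b r) := by
  induction b with
  | zero => rfl
  | succ b ih =>
    rw [ih (by omega), ← h.shift hn (a := k - (b + 1)) (b := b) (by omega) (by omega)]
    have : k - (b + 1) + 1 = k - b := by omega
    rw [this]

/-- One step down the chain: a bound `|Δf| ≤ K r^{-a}` with `2 < a < n` and `f = 0` on the boundary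
give `|f| ≤ K' r^{2-a}`. -/
lemma decay_step (h : RadChain n k F) (hn : 3 ≤ n) {j : ℕ} (hj : 2 * j < k) {K a : ℝ} (hK : 0 ≤ K)
    (ha : 2 < a) (han : a < n) (hb : ∀ r ∈ Set.Ioo (0:ℝ) 1, |F (j + 1) r| ≤ K * r ^ (-a)) :
    ∀ r ∈ Set.Ioo (0:ℝ) 1, |F j r| ≤ K / (n - a) / (a - 2) * r ^ (2 - a) := by
  have hjk : j < k := by omega
  have c1 := h.continuous_deriv hjk
  have hn0 : n - 1 ≠ 0 := by omega
  intro r hr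
  refine decay_of_deriv (div_nonneg hK (sub_nonneg.2 han.le)) ha
    (fun s => (h.differentiable hjk s).hasDerivAt) (h.bdry_zero hj) (fun s hs => ?_) hr
  have hfl := flux_bound (by omega) han (D := fun s => s ^ (n - 1) * deriv (F j) s)
    (by fun_prop) (by simp [hn0]) (fun s hs => h.hasDerivAt_flux hn hjk hs) hb hs
  have hp : 0 < s ^ (n - 1) := pow_pos hs.1 _
  simp only [abs_mul, abs_of_pos hp] at hfl
  refine le_of_mul_le_mul_left (hfl.trans (le_of_eq ?_)) hp
  have : s ^ ((n:ℝ) - a) = s ^ (n - 1) * s ^ (1 - a) := by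
    rw [← Real.rpow_natCast s (n - 1), ← Real.rpow_add hs.1]
    congr 1
    push_cast [Nat.cast_sub (by omega : 1 ≤ n)]
    ring
  rw [this]
  ring

/-- The start of the descent for `k = 2m` even: the energy is the weighted `L²` norm of `F m`. -/
lemma decay_start_even (h : RadChain n k F) (hn : 4 < n) {m : ℕ} (hk : k = 2 * (m + 1)) {E : ℝ}
    (hE : |∫ r in (0:ℝ)..1, r ^ (n - 1) * (F k r * F 0 r)| ≤ E) :
    ∀ r ∈ Set.Ioo (0:ℝ) 1, |F m r| ≤ (E + 1) / ((n:ℝ) / 2 - 2) * r ^ (2 - (n:ℝ) / 2) := by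
  have hmk : m < k := by omega
  have hn' : (4:ℝ) < n := by exact_mod_cast hn
  have c1 := h.continuous_deriv hmk
  have hn0 : n - 1 ≠ 0 := by omega
  have hE0 : 0 ≤ E := (abs_nonneg _).trans hE
  have hkm : k - (m + 1) = m + 1 := by omega
  rw [h.shift_iter (by omega) (m + 1) hk.ge, hkm] at hE
  simp only [← sq] at hE
  intro r hr
  refine decay_of_deriv (by linarith) (by linarith)
    (fun s => (h.differentiable hmk s).hasDerivAt) (h.bdry_zero (by omega)) (fun s hs => ?_) hr
  have hfl := flux_bound_of_L2 (by omega) (D := fun s => s ^ (n - 1) * deriv (F m) s)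
    (by fun_prop) (by simp [hn0]) (h.continuous (show m + 1 ≤ k from hmk))
    (fun s hs => h.hasDerivAt_flux (by omega) hmk hs) ((le_abs_self _).trans hE) hs
  have hp : 0 < s ^ (n - 1) := pow_pos hs.1 _
  simp only [abs_mul, abs_of_pos hp] at hfl
  refine le_of_mul_le_mul_left (hfl.trans (le_of_eq ?_)) hp
  have : s ^ ((n:ℝ) / 2) = s ^ (n - 1) * s ^ (1 - (n:ℝ) / 2) := by
    rw [← Real.rpow_natCast s (n - 1), ← Real.rpow_add hs.1]
    congr 1
    push_cast [Nat.cast_sub (by omega : 1 ≤ n)]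
    ring
  rw [this]
  ring

/-- The start of the descent for `k = 2m + 1` odd: up to sign, the energy is the weighted `L²` norm
of `(F m)'`. -/
lemma decay_start_odd (h : RadChain n k F) (hn : 3 ≤ n) {m : ℕ} (hk : k = 2 * m + 1) {E : ℝ}
    (hE : |∫ r in (0:ℝ)..1, r ^ (n - 1) * (F k r * F 0 r)| ≤ E) :
    ∀ r ∈ Set.Ioo (0:ℝ) 1, |F m r| ≤ (E + 1) * r ^ (1 - (n:ℝ) / 2) := by
  have hmk : m < k := by omega
  have c1 := h.continuous_deriv hmk
  have c2 := h.continuous hmk.le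
  have c3 := h.continuous (show m + 1 ≤ k from hmk)
  have hkm : k - m = m + 1 := by omega
  have hz : F m 1 = 0 := h.bdry_zero (by omega)
  have g := h.green hn hmk hmk
  rw [hz, mul_zero] at g
  simp only [mul_add] at g
  rw [intervalIntegral.integral_add (Continuous.intervalIntegrable (by fun_prop) _ _)
    (Continuous.intervalIntegrable (by fun_prop) _ _), add_eq_zero_iff_eq_neg] at g
  rw [h.shift_iter hn m (by omega), hkm, g, abs_neg] at hE
  simp only [← sq] at hE
  intro r hr
  exact decay_of_deriv_L2 hn (fun s => (h.differentiable hmk s).hasDerivAt) c1 hz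
    ((le_abs_self _).trans hE) hr

end RadChain

/-- Radial decay, uniform over all chains of energy at most `E`. -/
lemma radChain_decay {n k : ℕ} (hk : 1 ≤ k) (hn : 2 * k < n) {E : ℝ} (hE : 0 ≤ E) :
    ∃ C : ℝ, 0 ≤ C ∧ ∀ F : ℕ → ℝ → ℝ, RadChain n k F →
      |∫ r in (0:ℝ)..1, r ^ (n - 1) * (F k r * F 0 r)| ≤ E →
      ∀ r ∈ Set.Ioo (0:ℝ) 1, |F 0 r| ≤ C * r ^ ((k:ℝ) - (n:ℝ) / 2) := by
  have hn' : 2 * (k:ℝ) < n := by exact_mod_cast hn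
  have hk' : (1:ℝ) ≤ k := by exact_mod_cast hk
  -- Descent in `j`; the exponent gains `2` with each Laplacian removed.
  have desc : ∀ j : ℕ, 2 * j < k → (∃ C : ℝ, 0 ≤ C ∧ ∀ F : ℕ → ℝ → ℝ, RadChain n k F →
      |∫ r in (0:ℝ)..1, r ^ (n - 1) * (F k r * F 0 r)| ≤ E →
      ∀ r ∈ Set.Ioo (0:ℝ) 1, |F j r| ≤ C * r ^ ((k:ℝ) - 2 * j - (n:ℝ) / 2)) →
      ∃ C : ℝ, 0 ≤ C ∧ ∀ F : ℕ → ℝ → ℝ, RadChain n k F →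
      |∫ r in (0:ℝ)..1, r ^ (n - 1) * (F k r * F 0 r)| ≤ E →
      ∀ r ∈ Set.Ioo (0:ℝ) 1, |F 0 r| ≤ C * r ^ ((k:ℝ) - (n:ℝ) / 2) := by
    intro j
    induction j with
    | zero =>
      rintro - ⟨C, hC, h⟩
      exact ⟨C, hC, by simpa using h⟩
    | succ j ih =>
      rintro hj ⟨C, hC, h⟩
      have hj' : 2 * ((j:ℝ) + 1) < k := by exact_mod_cast hj
      have hj0 : (0:ℝ) ≤ j := j.cast_nonneg
      refine ih (by omega) ⟨C / (n - (2 * ((j:ℝ) + 1) + n / 2 - k)) /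
        ((2 * ((j:ℝ) + 1) + n / 2 - k) - 2), ?_, fun F hF hFE r hr => ?_⟩
      · exact div_nonneg (div_nonneg hC (by linarith)) (by linarith)
      · have := hF.decay_step (by omega) (j := j) (by omega) hC
          (a := 2 * ((j:ℝ) + 1) + n / 2 - k) (by linarith) (by linarith) (fun s hs => by
            refine (h F hF hFE s hs).trans (le_of_eq ?_)
            push_cast
            congr 2
            ring) r hr
        refine this.trans (le_of_eq ?_)
        congr 2
        ring
  rcases Nat.even_or_odd' k with ⟨m, hm | hm⟩
  · obtain ⟨m, rfl⟩ : ∃ p, m = p + 1 := ⟨m - 1, by omega⟩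
    have hkm : (k:ℝ) = 2 * ((m:ℝ) + 1) := by exact_mod_cast hm
    have hn4 : (4:ℝ) < n := by
      have : 4 < n := by omega
      exact_mod_cast this
    refine desc m (by omega) ⟨(E + 1) / ((n:ℝ) / 2 - 2), div_nonneg (by linarith) (by linarith),
      fun F hF hFE r hr => (hF.decay_start_even (by omega) hm hFE r hr).trans (le_of_eq ?_)⟩
    congr 2
    rw [hkm]
    ring
  · have hkm : (k:ℝ) = 2 * (m:ℝ) + 1 := by exact_mod_cast hm
    refine desc m (by omega) ⟨E + 1, by linarith,
      fun F hF hFE r hr => (hF.decay_start_odd (by omega) hm hFE r hr).trans (le_of_eq ?_)⟩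
    congr 2
    rw [hkm]
    ring

/-! ### Energy bound and conclusion -/

lemma two_lt_twoStar {n k : ℕ} (hk : 1 ≤ k) (hn : 2 * k < n) : 2 < twoStar n k := by
  have hn' : 2 * (k:ℝ) < n := by exact_mod_cast hn
  have hk' : (1:ℝ) ≤ k := by exact_mod_cast hk
  rw [twoStar, lt_div_iff₀ (by linarith)]
  linarith

/-- Integration in polar coordinates of a power of a radial function over the unit ball. -/
lemma integral_ball_radial {n : ℕ} {e : EuclideanSpace ℝ (Fin n)} (he : ‖e‖ = 1)
    {u : EuclideanSpace ℝ (Fin n) → ℝ} (hu : IsRad u) (p : ℝ) :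
    (∫ x in Metric.ball (0 : EuclideanSpace ℝ (Fin n)) 1, |u x| ^ p)
      = n * (volume : Measure (EuclideanSpace ℝ (Fin n))).real (Metric.ball 0 1)
        * ∫ r in (0:ℝ)..1, r ^ (n - 1) * |radProfile e u r| ^ p := by
  have : Nontrivial (EuclideanSpace ℝ (Fin n)) :=
    ⟨⟨e, 0, by rw [← norm_ne_zero_iff, he]; exact one_ne_zero⟩⟩
  rw [← integral_indicator measurableSet_ball]
  have h1 : (Metric.ball (0 : EuclideanSpace ℝ (Fin n)) 1).indicator (fun x => |u x| ^ p)
      = fun x => (Set.Iio (1:ℝ)).indicator (fun r => |radProfile e u r| ^ p) ‖x‖ := by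
    ext x
    by_cases hx : ‖x‖ < 1
    · rw [Set.indicator_of_mem (by simpa using hx), Set.indicator_of_mem (by simpa using hx),
        hu.eq_radProfile he x]
    · rw [Set.indicator_of_notMem (by simpa using hx), Set.indicator_of_notMem (by simpa using hx)]
  rw [h1, integral_fun_norm_addHaar volume
    ((Set.Iio (1:ℝ)).indicator fun r => |radProfile e u r| ^ p)]
  have h2 : (fun y : ℝ => y ^ (n - 1) •
        (Set.Iio (1:ℝ)).indicator (fun r => |radProfile e u r| ^ p) y)
      = (Set.Iio (1:ℝ)).indicator fun y => y ^ (n - 1) * |radProfile e u y| ^ p := by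
    ext y
    by_cases hy : y ∈ Set.Iio (1:ℝ) <;> simp [hy, Set.indicator]
  simp only [finrank_euclideanSpace, Fintype.card_fin, h2]
  rw [setIntegral_indicator measurableSet_Iio, Set.Ioi_inter_Iio,
    intervalIntegral.integral_of_le zero_le_one, integral_Ioc_eq_integral_Ioo, nsmul_eq_mul,
    smul_eq_mul, mul_assoc]

/-- Energy bound: for a profile solving the equation, the pairing of `Δ^k u` with `u` is controlled
by the `L^{2*}` norm, using `t² ≤ 1 + |t|^{2*}`. -/
lemma energy_bound {n k : ℕ} {F : ℕ → ℝ → ℝ} (hF : RadChain n k F) (hk : 1 ≤ k) (hn : 2 * k < n)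
    {l L A : ℝ} (hl : 0 ≤ l) (hlL : l ≤ L)
    (heq : ∀ r ∈ Set.Ioo (0:ℝ) 1, F k r - l * F 0 r = |F 0 r| ^ (twoStar n k - 2) * F 0 r)
    (hA : ∫ r in (0:ℝ)..1, r ^ (n - 1) * |F 0 r| ^ twoStar n k ≤ A) :
    |∫ r in (0:ℝ)..1, r ^ (n - 1) * (F k r * F 0 r)| ≤ L + (L + 1) * A := by
  set p := twoStar n k with hp
  have hp2 : 2 < p := two_lt_twoStar hk hn
  have hc : Continuous (F 0) := hF.continuous (Nat.zero_le k)
  have hcp : Continuous fun r => |F 0 r| ^ p := hc.abs.rpow_const fun _ => Or.inr (by linarith)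
  have hL : 0 ≤ L := hl.trans hlL
  have hbd : ∀ r ∈ Set.Ioc (0:ℝ) 1,
      ‖r ^ (n - 1) * (F k r * F 0 r)‖ ≤ L + (L + 1) * (r ^ (n - 1) * |F 0 r| ^ p) := by
    intro r hr
    have hr0 : 0 ≤ r ^ (n - 1) := pow_nonneg hr.1.le _
    have hr1 : r ^ (n - 1) ≤ 1 := pow_le_one₀ hr.1.le hr.2
    have hpp : 0 ≤ |F 0 r| ^ p := Real.rpow_nonneg (abs_nonneg _) _
    rcases hr.2.eq_or_lt with h1 | h1
    -- The equation is only known in the open interval; at `r = 1` the profile vanishes.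
    · subst h1
      have : F 0 1 = 0 := hF.bdry_zero (by omega)
      rw [this, mul_zero, mul_zero, norm_zero]
      have : (0:ℝ) ≤ |0| ^ p := Real.rpow_nonneg (abs_nonneg _) _
      positivity
    · have h2 : F k r * F 0 r = l * |F 0 r| ^ 2 + |F 0 r| ^ p := by
        have h3 : |F 0 r| ^ (p - 2) * |F 0 r| ^ 2 = |F 0 r| ^ p := by
          rcases (abs_nonneg (F 0 r)).eq_or_lt with h0 | h0
          · rw [← h0, Real.zero_rpow (by linarith : p ≠ 0)]
            simp
          · rw [← Real.rpow_natCast, ← Real.rpow_add h0]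
            congr 1
            push_cast
            ring
        have h4 := heq r ⟨hr.1, h1⟩
        have h5 : F k r = l * F 0 r + |F 0 r| ^ (p - 2) * F 0 r := by linarith
        rw [h5, ← h3, sq_abs]
        ring
      have h6 : |F 0 r| ^ 2 ≤ 1 + |F 0 r| ^ p := by
        rcases le_total |F 0 r| 1 with h7 | h7
        · have := pow_le_one₀ (n := 2) (abs_nonneg (F 0 r)) h7
          linarith
        · have := Real.rpow_le_rpow_of_exponent_le h7 hp2.le
          rw [Real.rpow_two] at this
          linarith
      have h8 : l * |F 0 r| ^ 2 ≤ L * (1 + |F 0 r| ^ p) :=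
        mul_le_mul hlL h6 (by positivity) hL
      rw [h2, Real.norm_of_nonneg (by positivity)]
      calc r ^ (n - 1) * (l * |F 0 r| ^ 2 + |F 0 r| ^ p)
          ≤ r ^ (n - 1) * (L * (1 + |F 0 r| ^ p) + |F 0 r| ^ p) := by gcongr
        _ = L * r ^ (n - 1) + (L + 1) * (r ^ (n - 1) * |F 0 r| ^ p) := by ring
        _ ≤ L * 1 + (L + 1) * (r ^ (n - 1) * |F 0 r| ^ p) := by gcongr
        _ = _ := by ring
  have h := intervalIntegral.norm_integral_le_of_norm_le (μ := volume) zero_le_one (Eventually.of_forall hbd)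
    (Continuous.intervalIntegrable (by fun_prop) _ _)
  rw [Real.norm_eq_abs, intervalIntegral.integral_add
    (Continuous.intervalIntegrable (by fun_prop) _ _)
    (Continuous.intervalIntegrable (by fun_prop) _ _), intervalIntegral.integral_const_mul] at h
  refine h.trans ?_
  simp only [intervalIntegral.integral_const, sub_zero, one_smul]
  gcongr

theorem stmt3 (n k : ℕ) (hk : 2 ≤ 2 * k) (hn : 2 * k < n) (M : ℝ) (hM : 0 < M)
    (lam : ℕ → ℝ) (u : ℕ → EuclideanSpace ℝ (Fin n) → ℝ)
    (hsetup : BlowUpSetup n k M lam u) :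
    ∃ C : ℝ, 0 < C ∧ ∀ i, ∀ x ∈ Metric.ball (0 : EuclideanSpace ℝ (Fin n)) 1,
      ‖x‖ ^ (((n : ℝ) - 2 * k) / 2) * |u i x| ≤ C := by
  obtain ⟨hlam, hlim, hsm, hrad, heq, hbd, -, hint⟩ := hsetup
  have hk1 : 1 ≤ k := by omega
  have hn3 : 3 ≤ n := by omega
  have hn' : 2 * (k:ℝ) < n := by exact_mod_cast hn
  set e : EuclideanSpace ℝ (Fin n) := EuclideanSpace.single ⟨0, by omega⟩ 1 with he_def
  have he : ‖e‖ = 1 := by simp [he_def]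
  -- A convergent sequence is bounded, so the energy bound is uniform in `i`.
  obtain ⟨L, hL⟩ := hlim.bddAbove_range
  have hL' : ∀ i, lam i ≤ L := fun i => hL ⟨i, rfl⟩
  have hL0 : 0 ≤ L := (hlam 0).le.trans (hL' 0)
  set c : ℝ := n * (volume : Measure (EuclideanSpace ℝ (Fin n))).real (Metric.ball 0 1) with hc
  have hc0 : 0 < c := by
    refine mul_pos (by exact_mod_cast (by omega : 0 < n)) ?_
    exact ENNReal.toReal_pos (measure_ball_pos _ _ one_pos).ne' measure_ball_lt_top.ne
  set A : ℝ := M ^ twoStar n k / c with hA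
  have hA0 : 0 ≤ A := div_nonneg (Real.rpow_nonneg hM.le _) hc0.le
  obtain ⟨C, hC0, hC⟩ := radChain_decay hk1 hn (E := L + (L + 1) * A) (by positivity)
  refine ⟨C + 1, by linarith, fun i x hx => ?_⟩
  by_cases hx0 : x = 0
  · rw [hx0, norm_zero, Real.zero_rpow (by linarith), zero_mul]
    linarith
  have hr0 : 0 < ‖x‖ := norm_pos_iff.2 hx0
  have hr : ‖x‖ ∈ Set.Ioo (0:ℝ) 1 := ⟨hr0, by simpa using hx⟩
  have hF := radChain_of_radial he (hrad i) (hsm i) (fun j hj => hbd i e he j hj)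
  have hen := energy_bound hF hk1 hn (hlam i).le (hL' i) (A := A)
    (fun r hr => heq i (r • e) (by simp [norm_smul, he, abs_of_pos hr.1, hr.2]))
    (by
      rw [hA, le_div_iff₀' hc0]
      have h := hint i
      rw [integral_ball_radial he (hrad i)] at h
      exact h)
  have h := hC _ hF hen ‖x‖ hr
  have hu0 : radProfile e (iterLap 0 (u i)) ‖x‖ = u i x := (IsRad.eq_radProfile he (hrad i) x).symm
  rw [hu0] at h
  calc ‖x‖ ^ (((n : ℝ) - 2 * k) / 2) * |u i x|
      ≤ ‖x‖ ^ (((n : ℝ) - 2 * k) / 2) * (C * ‖x‖ ^ ((k:ℝ) - (n:ℝ) / 2)) := by gcongr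
    _ = C * ‖x‖ ^ (((n : ℝ) - 2 * k) / 2 + ((k:ℝ) - (n:ℝ) / 2)) := by
        rw [Real.rpow_add hr0]
        ring
    _ = C := by
        rw [show ((n : ℝ) - 2 * k) / 2 + ((k:ℝ) - (n:ℝ) / 2) = 0 by ring, Real.rpow_zero, mul_one]
    _ ≤ C + 1 := by linarith
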